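/- arXiv:1009.2688 — 3 statements merged into one kernel-verified Lean document; each statement's English description precedes it below -/
import Mathlib

section
/- Let Ω ⊂ ℝ² be a bounded open connected set whose topological boundary ∂Ω is a Jordan curve, i.e. the image of an injective continuous map from the unit circle 𝕊¹ (equivalently, a homeomorphic image of 𝕊¹). Then the closure cl(Ω) is path-connected and simply connected. -/
/-- A Jordan curve in the plane: the image of an injective continuous map from the
unit circle `𝕊¹`. -/
def IsJordanCurve (C : Set (EuclideanSpace ℝ (Fin 2))) : Prop :=
  ∃ f : Metric.sphere (0 : EuclideanSpace ℝ (Fin 2)) 1 → EuclideanSpace ℝ (Fin 2),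
    Continuous f ∧ Function.Injective f ∧ Set.range f = C

/-!
Identify the plane with `ℂ`, let `f` parametrize the boundary and let `w` be an interior point.
Write `f z - w = z ^ n * exp (φ z)`. If `n` were `0`, then `exp φ` would extend to `Ω` without
zeros, and glued with `x - w` outside `Ω` it would give the identity of a large circle a continuous
logarithm. If `|n| ≥ 2`, then `f - w` is the `|n|`-th power of a loop `s` around `0`; injectivity
of `f` makes `s` disjoint from its rotation by `2π / |n|`, which is impossible for a loop around
the centre of rotation. Hence `n = ±1`, so extending `φ` by Tietze's theorem and normalizing
`(x - w) * exp (-φ x)` inverts `f` by a map to the circle defined off `w`. Its composite with `f`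
retracts the complement of `Ω` onto the boundary, so the closure of `Ω` is a retract of the plane.
-/

open Function Metric Set Topology

section Topology

variable {X Y : Type*} [TopologicalSpace X] [TopologicalSpace Y]

lemma contractibleSpace_of_leftInverse [ContractibleSpace X] (r : C(X, Y)) (i : C(Y, X))
    (h : LeftInverse r i) : ContractibleSpace Y := by
  rw [contractible_iff_id_nullhomotopic]
  have hri : r.comp i = ContinuousMap.id Y := ContinuousMap.ext h
  exact hri ▸ ((id_nullhomotopic X).comp_left i).comp_right r

lemma exists_retraction_closure {Ω : Set X} {f : Y → X} {c : X → Y} (hf : Continuous f)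
    (hrange : range f = frontier Ω) (hc : ContinuousOn c (closure Ωᶜ)) (hcf : LeftInverse c f) :
    ∃ r : C(X, closure Ω), ∀ x : closure Ω, r x = x := by
  classical
  have hfix : ∀ x ∈ frontier Ω, f (c x) = x := by
    rw [← hrange]
    rintro _ ⟨y, rfl⟩
    rw [hcf y]
  let g : X → X := Ω.piecewise id (f ∘ c)
  have hg : Continuous g := continuous_piecewise (fun x hx => (hfix x hx).symm)
    continuousOn_id (hf.comp_continuousOn hc)
  have hmem : ∀ x, g x ∈ closure Ω := fun x => by
    by_cases hx : x ∈ Ω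
    · simpa only [g, piecewise_eq_of_mem _ _ _ hx] using! subset_closure hx
    · simpa only [g, piecewise_eq_of_notMem _ _ _ hx] using
        frontier_subset_closure (hrange ▸ mem_range_self (c x))
  refine ⟨⟨fun x => ⟨g x, hmem x⟩, hg.subtype_mk hmem⟩, fun ⟨x, hx⟩ => Subtype.ext ?_⟩
  by_cases hxΩ : x ∈ Ω
  · exact piecewise_eq_of_mem _ _ _ hxΩ
  · exact (piecewise_eq_of_notMem _ _ _ hxΩ).trans
      (hfix x ⟨hx, fun h => hxΩ (interior_subset h)⟩)

lemma subset_of_disjoint_frontier {S V : Set X} (hS : IsPreconnected S) (hV : IsOpen V)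
    (hd : Disjoint S (frontier V)) (hne : (S ∩ V).Nonempty) : S ⊆ V := by
  refine hS.subset_of_closure_inter_subset hV hne fun x ⟨hxV, hxS⟩ => ?_
  by_contra hx
  exact disjoint_left.1 hd hxS ⟨hxV, fun h => hx (interior_subset h)⟩

lemma frontier_connectedComponentIn_subset_compl [LocallyConnectedSpace X] {W : Set X}
    (hW : IsOpen W) (a : X) : frontier (connectedComponentIn W a) ⊆ Wᶜ := by
  intro x hx hxW
  obtain ⟨y, hyx, hya⟩ := mem_closure_iff.1 hx.1 _ (hW.connectedComponentIn (x := x))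
    (mem_connectedComponentIn hxW)
  have heq : connectedComponentIn W x = connectedComponentIn W a :=
    (connectedComponentIn_eq hyx).trans (connectedComponentIn_eq hya).symm
  rw [hW.connectedComponentIn.frontier_eq] at hx
  exact hx.2 (heq ▸ mem_connectedComponentIn hxW)

lemma exists_comp_circleExp_eq {ψ : ℝ → X} (hψ : Continuous ψ) (hper : Periodic ψ (2 * Real.pi)) :
    ∃ g : C(Circle, X), ∀ t, g (Circle.exp t) = ψ t := by
  have hlift : Continuous hper.lift := hψ.quotient_lift _
  refine ⟨⟨hper.lift ∘ AddCircle.homeomorphCircle'.symm, by fun_prop⟩, fun t => ?_⟩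
  rw [← AddCircle.homeomorphCircle'_apply_mk]
  simp

end Topology

section Norm

variable {E : Type*} [NormedAddCommGroup E] [NormedSpace ℝ E]

lemma mem_frontier_of_isMaxOn_norm [Nontrivial E] {U : Set E} {p : E} (hp : p ∈ closure U)
    (hmax : IsMaxOn norm (closure U) p) : p ∈ frontier U := by
  refine ⟨hp, fun hpU => ?_⟩
  have hsub : interior U ⊆ closedBall 0 ‖p‖ := fun x hx =>
    mem_closedBall_zero_iff.2 (hmax (subset_closure (interior_subset hx)))
  have hball := interior_maximal hsub isOpen_interior hpU
  rw [interior_closedBall', mem_ball_zero_iff] at hball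
  exact hball.false

/- A point `p` of largest norm in the closure of the component `U` lies on `C`, and `e p` is a point
of largest norm in the closure of `e '' U`. If `C` and `e '' C` were disjoint, then either
`C ⊆ e '' U`, so that `p` is interior to `e '' U`, or `e '' U ⊆ U`, which forces `e p` to lie
on `C`. -/
lemma inter_image_nonempty_of_isBounded_connectedComponentIn [ProperSpace E] [Nontrivial E]
    {C : Set E} (hC : IsClosed C) (hconn : IsPreconnected C) (h0 : (0 : E) ∉ C)
    (hb : Bornology.IsBounded (connectedComponentIn Cᶜ 0)) (e : E ≃ₗᵢ[ℝ] E) :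
    (C ∩ e '' C).Nonempty := by
  by_contra hne
  have hdisj : Disjoint C (e '' C) := disjoint_iff_inter_eq_empty.2
    (not_nonempty_iff_eq_empty.1 hne)
  set U := connectedComponentIn Cᶜ (0 : E)
  have hUo : IsOpen U := hC.isOpen_compl.connectedComponentIn
  have h0U : (0 : E) ∈ U := mem_connectedComponentIn h0
  have hfU : frontier U ⊆ C := by
    simpa only [compl_compl] using frontier_connectedComponentIn_subset_compl hC.isOpen_compl 0
  have heUo : IsOpen (e '' U) := e.toHomeomorph.isOpenMap U hUo
  have hfeU : frontier (e '' U) ⊆ e '' C :=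
    (e.toHomeomorph.image_frontier U).symm.subset.trans (image_mono hfU)
  obtain ⟨p, hpU, hpmax⟩ := hb.isCompact_closure.exists_isMaxOn ⟨0, subset_closure h0U⟩
    continuous_norm.continuousOn
  have hpC : p ∈ C := hfU (mem_frontier_of_isMaxOn_norm hpU hpmax)
  by_cases hmeet : (C ∩ e '' U).Nonempty
  · have hCeU : C ⊆ e '' U := subset_of_disjoint_frontier hconn heUo (hdisj.mono_right hfeU) hmeet
    have hpmax' : IsMaxOn norm (closure (e '' U)) p := by
      rw [show closure (e '' U) = e '' closure U from (e.toHomeomorph.image_closure U).symm]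
      rintro _ ⟨x, hx, rfl⟩
      simpa using hpmax hx
    exact (mem_frontier_of_isMaxOn_norm (subset_closure (hCeU hpC)) hpmax').2
      (heUo.interior_eq.symm ▸ hCeU hpC)
  · have heUU : e '' U ⊆ U := by
      refine subset_of_disjoint_frontier
        (isPreconnected_connectedComponentIn.image e e.continuous.continuousOn) hUo ?_
        ⟨0, ⟨0, h0U, map_zero e⟩, h0U⟩
      exact disjoint_left.2 fun x hx hxf => hmeet ⟨x, hfU hxf, hx⟩
    have hepU : e p ∈ closure U := closure_mono heUU
      (image_closure_subset_closure_image e.continuous ⟨p, hpU, rfl⟩)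
    have hepmax : IsMaxOn norm (closure U) (e p) := fun x hx => by simpa using hpmax hx
    exact hne ⟨e p, hfU (mem_frontier_of_isMaxOn_norm hepU hepmax), p, hpC, rfl⟩

end Norm

/-- The complex function `g` has a continuous logarithm. For a loop `g : Circle → ℂ` avoiding `0`
this says that its winding number around `0` vanishes. -/
def HasContinuousLog {A : Type*} [TopologicalSpace A] (g : A → ℂ) : Prop :=
  ∃ L : C(A, ℂ), ∀ a, Complex.exp (L a) = g a

section ContinuousLog

variable {A B : Type*} [TopologicalSpace A] [TopologicalSpace B]

lemma HasContinuousLog.comp {g : A → ℂ} (hg : HasContinuousLog g) {h : B → A}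
    (hh : Continuous h) : HasContinuousLog (g ∘ h) :=
  let ⟨L, hL⟩ := hg
  ⟨L.comp ⟨h, hh⟩, fun b => hL (h b)⟩

lemma HasContinuousLog.mul {g h : A → ℂ} (hg : HasContinuousLog g) (hh : HasContinuousLog h) :
    HasContinuousLog (g * h) :=
  let ⟨L, hL⟩ := hg
  let ⟨M, hM⟩ := hh
  ⟨L + M, fun a => by rw [ContinuousMap.add_apply, Complex.exp_add, hL, hM, Pi.mul_apply]⟩

lemma hasContinuousLog_exp (φ : C(A, ℂ)) : HasContinuousLog fun a => Complex.exp (φ a) :=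
  ⟨φ, fun _ => rfl⟩

lemma hasContinuousLog_const {b : ℂ} (hb : b ≠ 0) : HasContinuousLog fun _ : A => b :=
  ⟨.const A (Complex.log b), fun _ => Complex.exp_log hb⟩

lemma hasContinuousLog_of_mem_slitPlane {g : A → ℂ} (hg : Continuous g)
    (hslit : ∀ a, g a ∈ Complex.slitPlane) : HasContinuousLog g :=
  ⟨⟨fun a => Complex.log (g a), hg.clog hslit⟩,
    fun a => Complex.exp_log (Complex.slitPlane_ne_zero (hslit a))⟩

lemma hasContinuousLog_of_simplyConnectedSpace [SimplyConnectedSpace A]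
    [LocallyPathConnectedSpace A] {g : A → ℂ} (hg : Continuous g) (h0 : ∀ a, g a ≠ 0) :
    HasContinuousLog g := by
  obtain ⟨a₀⟩ : Nonempty A := inferInstance
  obtain ⟨L, ⟨-, hL⟩, -⟩ := Complex.isCoveringMapOn_exp.existsUnique_continuousMap_lifts
    (⟨g, hg⟩ : C(A, ℂ)) (Complex.exp_log (h0 a₀)) h0
  exact ⟨L, congrFun hL⟩

lemma sub_eq_sub_of_exp_eq [PreconnectedSpace A] {L M : A → ℂ} (hL : Continuous L)
    (hM : Continuous M) (h : ∀ a, Complex.exp (L a) = Complex.exp (M a)) (a b : A) :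
    L a - M a = L b - M b :=
  Complex.isCoveringMap_exp.const_of_comp (hL.sub hM)
    (fun _ _ => Subtype.ext (by simp [Complex.exp_sub, h])) a b

lemma hasContinuousLog_of_homotopy (H : C(unitInterval × A, ℂ)) (h0 : ∀ p, H p ≠ 0)
    (hlog : HasContinuousLog fun a => H (0, a)) : HasContinuousLog fun a => H (1, a) := by
  obtain ⟨L, hL⟩ := hlog
  let H' : C(unitInterval × A, {z : ℂ // z ≠ 0}) := ⟨fun p => ⟨H p, h0 p⟩, by fun_prop⟩
  have hH'L : ∀ a, H' (0, a) = ⟨Complex.exp (L a), Complex.exp_ne_zero _⟩ := fun a =>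
    Subtype.ext (hL a).symm
  let K := Complex.isCoveringMap_exp.liftHomotopy H' L hH'L
  exact ⟨⟨fun a => K (1, a), by fun_prop⟩, fun a => congrArg Subtype.val
    (congrFun (Complex.isCoveringMap_exp.liftHomotopy_lifts H' L hH'L) (1, a))⟩

lemma hasContinuousLog_sub_of_norm_lt {s : A → ℂ} (hs : Continuous s) {b : ℂ}
    (hb : ∀ a, ‖s a‖ < ‖b‖) : HasContinuousLog fun a => s a - b := by
  rcases eq_or_ne b 0 with rfl | hb0
  · exact ⟨0, fun a => absurd (hb a) (by simp)⟩
  have hslit : ∀ a, 1 + -(s a / b) ∈ Complex.slitPlane := fun a =>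
    Complex.mem_slitPlane_of_norm_lt_one (by
      rw [norm_neg, norm_div, div_lt_one (norm_pos_iff.2 hb0)]
      exact hb a)
  convert (hasContinuousLog_const (neg_ne_zero.2 hb0)).mul
    (hasContinuousLog_of_mem_slitPlane (by fun_prop) hslit) using 2 with a
  simp only [Pi.mul_apply]
  field_simp
  ring

lemma hasContinuousLog_sub_of_not_isBounded [CompactSpace A] {s : A → ℂ} (hs : Continuous s)
    {w : ℂ} (hw : ¬ Bornology.IsBounded (connectedComponentIn (range s)ᶜ w)) :
    HasContinuousLog fun a => s a - w := by
  set U := connectedComponentIn (range s)ᶜ w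
  obtain ⟨M, hM⟩ := (isCompact_range hs).isBounded.exists_norm_le
  obtain ⟨b, hbU, hbM⟩ : ∃ b ∈ U, M < ‖b‖ := by
    by_contra! hcon
    exact hw (isBounded_iff_forall_norm_le.2 ⟨M, hcon⟩)
  have hUo : IsOpen U := (isCompact_range hs).isClosed.isOpen_compl.connectedComponentIn
  have hwU : w ∈ U := mem_connectedComponentIn (connectedComponentIn_nonempty_iff.1 ⟨b, hbU⟩)
  obtain ⟨γ, hγ⟩ := (hUo.isConnected_iff_isPathConnected.1
    ⟨⟨w, hwU⟩, isPreconnected_connectedComponentIn⟩).joinedIn b hbU w hwU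
  have hfar : HasContinuousLog fun a => s a - b :=
    hasContinuousLog_sub_of_norm_lt hs fun a => (hM _ ⟨a, rfl⟩).trans_lt hbM
  let H : C(unitInterval × A, ℂ) := ⟨fun p => s p.2 - γ p.1, by fun_prop⟩
  have hH0 : ∀ p, H p ≠ 0 := fun p hp =>
    connectedComponentIn_subset _ _ (hγ p.1) ⟨p.2, sub_eq_zero.1 hp⟩
  simpa [H] using hasContinuousLog_of_homotopy H hH0 (by simpa [H] using hfar)

lemma hasContinuousLog_of_injective_pow [CompactSpace A] [PreconnectedSpace A] {s : A → ℂ}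
    (hs : Continuous s) (h0 : ∀ a, s a ≠ 0) {m : ℕ} (hm : 1 < m)
    (hinj : Injective fun a => s a ^ m) : HasContinuousLog s := by
  by_contra hlog
  have hb : Bornology.IsBounded (connectedComponentIn (range s)ᶜ 0) := by
    by_contra hb
    exact hlog (by simpa using hasContinuousLog_sub_of_not_isBounded hs hb)
  have hζ := Complex.isPrimitiveRoot_exp m (by omega)
  set ζ := Complex.exp (2 * Real.pi * Complex.I / m)
  let u : Circle := ⟨ζ, mem_sphere_zero_iff_norm.2 (hζ.norm'_eq_one (by omega))⟩
  obtain ⟨_, ⟨a, ha⟩, _, ⟨b, rfl⟩, hab⟩ := inter_image_nonempty_of_isBounded_connectedComponentIn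
    (isCompact_range hs).isClosed (isPreconnected_range hs) (fun ⟨a, ha⟩ => h0 a ha) hb (rotation u)
  have hrot : s a = ζ * s b := ha.trans hab.symm
  obtain rfl : a = b := hinj (by simp only [hrot, mul_pow, hζ.pow_eq_one, one_mul])
  exact hζ.ne_one hm (mul_eq_right₀ (h0 a) |>.1 hrot.symm)

end ContinuousLog

section Circle

lemma eq_zero_of_hasContinuousLog_circle_zpow {n : ℤ}
    (h : HasContinuousLog fun z : Circle => (z : ℂ) ^ n) : n = 0 := by
  obtain ⟨L, (hL : ∀ z : Circle, Complex.exp (L z) = (z : ℂ) ^ n)⟩ := h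
  have key := sub_eq_sub_of_exp_eq (L := fun t : ℝ => L (Circle.exp t))
    (M := fun t => n * (t * Complex.I)) (by fun_prop) (by fun_prop)
    (fun t => by rw [hL, Circle.coe_exp, Complex.exp_int_mul]) (2 * Real.pi) 0
  simpa [Real.pi_ne_zero] using key

lemma exists_eq_zpow_mul_exp {u : Circle → ℂ} (hu : Continuous u) (h0 : ∀ z, u z ≠ 0) :
    ∃ n : ℤ, ∃ φ : C(Circle, ℂ), ∀ z : Circle, u z = (z : ℂ) ^ n * Complex.exp (φ z) := by
  have hlog : HasContinuousLog fun t : ℝ => u (Circle.exp t) :=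
    hasContinuousLog_of_simplyConnectedSpace (by fun_prop) fun _ => h0 _
  obtain ⟨L, (hL : ∀ t, Complex.exp (L t) = u (Circle.exp t))⟩ := hlog
  have hexp : ∀ t : ℝ, Complex.exp (L (t + 2 * Real.pi)) = Complex.exp (L t) := fun t => by
    rw [hL, hL, Circle.periodic_exp t]
  obtain ⟨n, hn⟩ := Complex.exp_eq_exp_iff_exists_int.1 (hexp 0)
  have hshift : ∀ t, L (t + 2 * Real.pi) = L t + n * (2 * Real.pi * Complex.I) := fun t => by
    have := sub_eq_sub_of_exp_eq (by fun_prop) (by fun_prop) hexp t 0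
    linear_combination this + hn
  obtain ⟨φ, hφ⟩ := exists_comp_circleExp_eq (ψ := fun t => L t - n * (t * Complex.I))
    (by fun_prop) fun t => by
      simp only [hshift]
      push_cast
      ring
  refine ⟨n, φ, fun z => ?_⟩
  obtain ⟨t, rfl⟩ := Circle.exp_surjective z
  rw [hφ, ← hL, Circle.coe_exp, ← Complex.exp_int_mul, ← Complex.exp_add, add_sub_cancel]

lemma natAbs_le_one_of_injective_zpow_mul_exp {n : ℤ} {φ : C(Circle, ℂ)}
    (hinj : Injective fun z : Circle => (z : ℂ) ^ n * Complex.exp (φ z)) : n.natAbs ≤ 1 := by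
  by_contra! hn
  have hm : (n.natAbs : ℂ) ≠ 0 := Nat.cast_ne_zero.2 (by omega)
  let ψ : C(Circle, ℂ) := ⟨fun z => φ z / n.natAbs, by fun_prop⟩
  let s : Circle → ℂ := fun z => (z : ℂ) ^ n.sign * Complex.exp (ψ z)
  have hpow : ∀ z, s z ^ n.natAbs = (z : ℂ) ^ n * Complex.exp (φ z) := fun z => by
    rw [mul_pow, ← zpow_natCast, ← zpow_mul, Int.sign_mul_natAbs, ← Complex.exp_nat_mul]
    simp only [ψ, ContinuousMap.coe_mk, mul_div_cancel₀ _ hm]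
  have hslog : HasContinuousLog s := hasContinuousLog_of_injective_pow
    (by fun_prop (disch := simp)) (by simp [s, zpow_ne_zero]) hn
    (by simpa only [hpow] using hinj)
  have hsign : HasContinuousLog fun z : Circle => (z : ℂ) ^ n.sign := by
    convert hslog.mul (hasContinuousLog_exp (-ψ)) using 2 with z
    simp [s, mul_assoc, ← Complex.exp_add]
  have := Int.sign_eq_zero_iff_zero.1 (eq_zero_of_hasContinuousLog_circle_zpow hsign)
  omega

lemma continuousOn_circleExp_arg : ContinuousOn (fun x : ℂ => Circle.exp x.arg) {0}ᶜ := by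
  have hcoe : EqOn (fun x : ℂ => (Circle.exp x.arg : ℂ)) (fun x => x / ‖x‖) {0}ᶜ := fun x hx => by
    change (Circle.exp x.arg : ℂ) = x / ‖x‖
    rw [Circle.coe_exp, eq_div_iff (by simpa using hx), mul_comm, Complex.norm_mul_exp_arg_mul_I]
  exact IsInducing.subtypeVal.continuousOn_iff.2
    (ContinuousOn.congr (by fun_prop (disch := simp)) hcoe)

lemma exists_continuousOn_leftInverse {f : Circle → ℂ} (hf : IsClosedEmbedding f) {w : ℂ} {n : ℤ}
    (hn : n * n = 1) {φ : C(Circle, ℂ)} (hφ : ∀ z, f z - w = (z : ℂ) ^ n * Complex.exp (φ z)) :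
    ∃ c : ℂ → Circle, ContinuousOn c {w}ᶜ ∧ LeftInverse c f := by
  obtain ⟨Φ, hΦ⟩ := φ.exists_extension' hf
  let q : ℂ → ℂ := fun x => (x - w) * Complex.exp (-Φ x)
  have hq0 : MapsTo q {w}ᶜ {0}ᶜ := fun x hx =>
    mul_ne_zero (sub_ne_zero.2 hx) (Complex.exp_ne_zero _)
  have hqf : ∀ z, q (f z) = ((z ^ n : Circle) : ℂ) := fun z => by
    simp only [q, hφ, show Φ (f z) = φ z from congrFun hΦ z, mul_assoc, ← Complex.exp_add,
      add_neg_cancel, Complex.exp_zero, mul_one, Circle.coe_zpow]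
  refine ⟨fun x => Circle.exp (q x).arg ^ n, ?_, fun z => ?_⟩
  · exact (continuousOn_circleExp_arg.comp (by fun_prop) hq0).zpow n
  · simp only [hqf, Circle.exp_arg, ← zpow_mul, hn, zpow_one]

end Circle

section PlaneDomain

variable {Ω : Set ℂ} {w : ℂ}

lemma not_hasContinuousLog_sub_of_range_eq_frontier {A : Type*} [TopologicalSpace A] {f : A → ℂ}
    (hb : Bornology.IsBounded Ω) (hw : w ∈ interior Ω) (hf : IsClosedEmbedding f)
    (hrange : range f = frontier Ω) : ¬ HasContinuousLog fun a => f a - w := by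
  classical
  rintro ⟨φ, hφ⟩
  obtain ⟨Φ, hΦ⟩ := φ.exists_extension' hf
  let G : ℂ → ℂ := Ω.piecewise (fun x => Complex.exp (Φ x)) (fun x => x - w)
  have hG : Continuous G := by
    refine continuous_piecewise ?_ (by fun_prop) (by fun_prop)
    rw [← hrange]
    rintro _ ⟨a, rfl⟩
    rw [show Φ (f a) = φ a from congrFun hΦ a, hφ]
  have hG0 : ∀ x, G x ≠ 0 := fun x => by
    by_cases hx : x ∈ Ω
    · simp only [G, piecewise_eq_of_mem _ _ _ hx, ne_eq, Complex.exp_ne_zero, not_false_eq_true]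
    · rw [show G x = x - w from piecewise_eq_of_notMem _ _ _ hx, sub_ne_zero]
      exact fun h => hx (h ▸ interior_subset hw)
  obtain ⟨R, hR, hΩR⟩ := hb.subset_ball_lt 0 w
  have hR0 : (R : ℂ) ≠ 0 := Complex.ofReal_ne_zero.2 hR.ne'
  have hGR : ∀ z : Circle, G (w + R * z) = R * z := fun z => by
    have hz : w + R * z ∉ Ω := fun h => by
      simpa [abs_of_pos hR, Circle.norm_coe] using hΩR h
    simp only [G, piecewise_eq_of_notMem _ _ _ hz, add_sub_cancel_left]
  have hlogG : HasContinuousLog fun z : Circle => G (w + R * z) :=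
    (hasContinuousLog_of_simplyConnectedSpace hG hG0).comp (by fun_prop)
  have hlog : HasContinuousLog fun z : Circle => (z : ℂ) ^ (1 : ℤ) := by
    convert (hasContinuousLog_const (inv_ne_zero hR0)).mul hlogG using 2 with z
    rw [Pi.mul_apply, hGR, inv_mul_cancel_left₀ hR0, zpow_one]
  exact one_ne_zero (eq_zero_of_hasContinuousLog_circle_zpow hlog)

lemma exists_sub_eq_zpow_mul_exp_of_range_eq_frontier {f : Circle → ℂ}
    (hb : Bornology.IsBounded Ω) (hw : w ∈ interior Ω) (hf : Continuous f) (hinj : Injective f)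
    (hrange : range f = frontier Ω) :
    ∃ n : ℤ, n * n = 1 ∧ ∃ φ : C(Circle, ℂ), ∀ z, f z - w = (z : ℂ) ^ n * Complex.exp (φ z) := by
  have hfw : ∀ z, f z - w ≠ 0 := fun z h =>
    (hrange ▸ mem_range_self z : f z ∈ frontier Ω).2 (sub_eq_zero.1 h ▸ hw)
  obtain ⟨n, φ, hφ⟩ := exists_eq_zpow_mul_exp (by fun_prop) hfw
  have hn_le : n.natAbs ≤ 1 := natAbs_le_one_of_injective_zpow_mul_exp (φ := φ)
    fun z z' h => hinj (sub_left_inj.1 ((hφ z).trans (h.trans (hφ z').symm)))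
  have hn_ne : n ≠ 0 := by
    rintro rfl
    refine not_hasContinuousLog_sub_of_range_eq_frontier hb hw (hf.isClosedEmbedding hinj) hrange ?_
    simpa only [hφ, zpow_zero, one_mul] using hasContinuousLog_exp φ
  exact ⟨n, Int.isUnit_mul_self (Int.isUnit_iff_natAbs_eq.2 (by omega)), φ, hφ⟩

theorem contractibleSpace_closure_of_range_eq_frontier {f : Circle → ℂ}
    (hint : (interior Ω).Nonempty) (hb : Bornology.IsBounded Ω) (hf : Continuous f)
    (hinj : Injective f) (hrange : range f = frontier Ω) : ContractibleSpace (closure Ω) := by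
  obtain ⟨w, hw⟩ := hint
  obtain ⟨n, hn, φ, hφ⟩ := exists_sub_eq_zpow_mul_exp_of_range_eq_frontier hb hw hf hinj hrange
  obtain ⟨c, hc, hcf⟩ := exists_continuousOn_leftInverse (hf.isClosedEmbedding hinj) hn hφ
  have hsub : closure Ωᶜ ⊆ {w}ᶜ := by
    rw [closure_compl, compl_subset_compl, singleton_subset_iff]
    exact hw
  obtain ⟨r, hr⟩ := exists_retraction_closure hf hrange (hc.mono hsub) hcf
  exact contractibleSpace_of_leftInverse r ⟨Subtype.val, continuous_subtype_val⟩ hr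

end PlaneDomain

lemma IsJordanCurve.exists_circle {C : Set (EuclideanSpace ℝ (Fin 2))} (hC : IsJordanCurve C) :
    ∃ f : Circle → EuclideanSpace ℝ (Fin 2), Continuous f ∧ Injective f ∧ range f = C := by
  obtain ⟨f, hf, hinj, hrange⟩ := hC
  let T := Complex.orthonormalBasisOneI.repr
  let h : Circle ≃ₜ sphere (0 : EuclideanSpace ℝ (Fin 2)) 1 :=
    T.toHomeomorph.subtype fun z => by
      change z ∈ sphere 0 1 ↔ T z ∈ sphere 0 1
      simp
  exact ⟨f ∘ h, hf.comp h.continuous, hinj.comp h.injective,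
    (h.surjective.range_comp f).trans hrange⟩

theorem stmt8_general (Ω : Set (EuclideanSpace ℝ (Fin 2))) (hint : (interior Ω).Nonempty)
    (hbdd : Bornology.IsBounded Ω) (hJordan : IsJordanCurve (frontier Ω)) :
    ContractibleSpace (closure Ω) := by
  obtain ⟨f, hf, hinj, hrange⟩ := hJordan.exists_circle
  let T := Complex.orthonormalBasisOneI.repr.symm
  let e : EuclideanSpace ℝ (Fin 2) ≃ₜ ℂ := T.toHomeomorph
  have hcontr : ContractibleSpace (closure (e '' Ω)) := by
    refine contractibleSpace_closure_of_range_eq_frontier (f := e ∘ f) ?_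
      (T.lipschitz.isBounded_image hbdd) (e.continuous.comp hf) (e.injective.comp hinj) ?_
    · rw [← e.image_interior]
      exact hint.image e
    · rw [range_comp, hrange, e.image_frontier]
  rw [← e.image_closure] at hcontr
  exact (e.image (closure Ω)).contractibleSpace

/-- if `Ω ⊂ ℝ²` is a bounded open connected set whose boundary is a Jordan
curve, then the closure of `Ω` is path-connected and simply connected. -/
theorem stmt8 (Ω : Set (EuclideanSpace ℝ (Fin 2)))
    (hopen : IsOpen Ω) (hconn : IsConnected Ω) (hbdd : Bornology.IsBounded Ω)
    (hJordan : IsJordanCurve (frontier Ω)) :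
    IsPathConnected (closure Ω) ∧ SimplyConnectedSpace (closure Ω) := by
  have := stmt8_general Ω (hopen.interior_eq.symm ▸ hconn.nonempty) hbdd hJordan
  exact ⟨isPathConnected_iff_pathConnectedSpace.2 inferInstance, inferInstance⟩
end

section
/- Let G = Ω \ ⋃_{i=1}^N cl(ω_i) be a planar domain with holes. Then the closure cl(G) is path-connected. -/
/-!
Holes can be cut out of the closure one at a time: a path that runs into a hole is stopped at its
first hit and completed along the boundary of the hole, which is path-connected. Stopping paths at
`∂Ω` instead shows that the closure of `Ω` is path-connected.

The only planar input is that a bounded open set `U` whose frontier is a Jordan curve `C` satisfies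
`frontier (closure U) = frontier U`. Otherwise the bounded open set `W = interior (closure U)`
contains a point of `C`, so its frontier lies on an open arc of `C`. Identify the plane with `ℂ`
and let `w ∈ U`. The function `z - w` has a continuous logarithm on that arc, hence on `frontier W`.
Extending this logarithm by Tietze's theorem and using its exponential on `W` and `z - w` elsewhere
gives a zero-free function on the whole plane; its logarithm restricts to a continuous logarithm of
`z - w` on a large circle around `w`, which does not exist.
-/

open Set Topology Metric Function

section PathConnected

variable {X : Type*} [TopologicalSpace X] {s u k : Set X} {x y : X}

theorem exists_mem_frontier_joinedIn_inter_closure (hu : IsOpen u) (hx : x ∈ u) (hy : y ∉ u)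
    (h : JoinedIn s x y) : ∃ z ∈ frontier u, JoinedIn (s ∩ closure u) x z := by
  obtain ⟨γ, hγ⟩ := h
  obtain ⟨t, htu, ht_least⟩ := (hu.isClosed_compl.preimage γ.continuous).isCompact.exists_isLeast
    ⟨1, by simpa using hy⟩
  have ht_pos : 0 < t := unitInterval.pos_iff_ne_zero.2 <| by
    rintro rfl
    exact htu (by simpa using hx)
  have h_before : MapsTo γ (Iio t) u := fun r hr => by_contra fun h => hr.not_ge (ht_least h)
  have h_upto : MapsTo γ (Iic t) (closure u) := by
    rw [← closure_Iio' (a := t) ⟨0, ht_pos⟩]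
    exact h_before.closure γ.continuous
  refine ⟨γ t, hu.frontier_eq ▸ ⟨h_upto self_mem_Iic, htu⟩,
    ⟨⟨fun r => γ (r * t), by fun_prop⟩, by simp, by simp⟩, fun r => ?_⟩
  exact ⟨hγ _, h_upto unitInterval.mul_le_right⟩

theorem isPathConnected_inter_closure (hs : IsPathConnected s) (hu : IsOpen u)
    (hfr : IsPathConnected (frontier u)) (hfrs : frontier u ⊆ s) :
    IsPathConnected (s ∩ closure u) := by
  have hfr_sub : frontier u ⊆ s ∩ closure u := subset_inter hfrs frontier_subset_closure
  obtain ⟨b, hb, hb_joined⟩ := hfr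
  refine ⟨b, hfr_sub hb, fun {x} hx => ?_⟩
  by_cases hxu : x ∈ u
  · have hbu : b ∉ u := (hu.frontier_eq ▸ hb).2
    obtain ⟨z, hz, hxz⟩ := exists_mem_frontier_joinedIn_inter_closure hu hxu hbu
      (hs.joinedIn x hx.1 b (hfrs hb))
    exact ((hb_joined hz).mono hfr_sub).trans hxz.symm
  · exact (hb_joined (hu.frontier_eq ▸ ⟨hx.2, hxu⟩)).mono hfr_sub

theorem isPathConnected_closure_of_frontier [PathConnectedSpace X] (hu : IsOpen u)
    (hfr : IsPathConnected (frontier u)) : IsPathConnected (closure u) := by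
  simpa using isPathConnected_inter_closure isPathConnected_univ hu hfr (subset_univ _)

theorem closure_sdiff_eq_closure_sdiff_interior (hu : IsOpen u) (hk : IsClosed k) (hku : k ⊆ u) :
    closure (u \ k) = closure u \ interior k := by
  rw [sdiff_eq, sdiff_eq, ← closure_compl]
  refine (closure_inter_subset_inter_closure _ _).antisymm fun z ⟨hzu, hzk⟩ => ?_
  by_cases hz : z ∈ k
  · exact hu.inter_closure ⟨hku hz, hzk⟩
  · rw [inter_comm]
    exact hk.isOpen_compl.inter_closure ⟨hz, hzu⟩

theorem isPathConnected_closure_sdiff (hu : IsOpen u) (hcl : IsPathConnected (closure u))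
    (hk : IsClosed k) (hfr : IsPathConnected (frontier k)) (hku : k ⊆ u) :
    IsPathConnected (closure (u \ k)) := by
  rw [closure_sdiff_eq_closure_sdiff_interior hu hk hku, sdiff_eq, ← closure_compl]
  exact isPathConnected_inter_closure hcl hk.isOpen_compl (by rwa [frontier_compl])
    (frontier_compl k ▸ hk.frontier_subset.trans (hku.trans subset_closure))

theorem isPathConnected_closure_sdiff_biUnion {ι : Type*} {K : ι → Set X} {t : Set ι}
    (ht : t.Finite) (hu : IsOpen u) (hcl : IsPathConnected (closure u))
    (hK : ∀ i ∈ t, IsClosed (K i)) (hfr : ∀ i ∈ t, IsPathConnected (frontier (K i)))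
    (hKu : ∀ i ∈ t, K i ⊆ u) (hdisj : t.PairwiseDisjoint K) :
    IsPathConnected (closure (u \ ⋃ i ∈ t, K i)) := by
  induction t, ht using Set.Finite.induction_on with
  | empty => simpa using hcl
  | @insert a t hat ht ih =>
    simp only [forall_mem_insert] at hK hfr hKu
    have h_open : IsOpen (u \ ⋃ i ∈ t, K i) := hu.sdiff (ht.isClosed_biUnion hK.2)
    have ha_disj : Disjoint (K a) (⋃ i ∈ t, K i) := disjoint_iUnion₂_right.2 fun i hi =>
      hdisj (mem_insert a t) (mem_insert_of_mem a hi) (ne_of_mem_of_not_mem hi hat).symm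
    have ha_sub : K a ⊆ u \ ⋃ i ∈ t, K i := subset_sdiff.2 ⟨hKu.1, ha_disj⟩
    rw [biUnion_insert, union_comm, ← sdiff_sdiff]
    exact isPathConnected_closure_sdiff h_open
      (ih hK.2 hfr.2 hKu.2 (hdisj.subset (subset_insert a t))) hK.1 hfr.1 ha_sub

end PathConnected

section Logarithm

theorem exists_continuous_exp_eq {A : Type*} [TopologicalSpace A] [SimplyConnectedSpace A]
    [LocallyPathConnectedSpace A] {g : A → ℂ} (hg : Continuous g) (hg₀ : ∀ a, g a ≠ 0) :
    ∃ l : A → ℂ, Continuous l ∧ ∀ a, Complex.exp (l a) = g a := by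
  obtain ⟨a₀⟩ : Nonempty A := inferInstance
  obtain ⟨l, ⟨-, hl⟩, -⟩ := Complex.isCoveringMap_exp.existsUnique_continuousMap_lifts
    ⟨fun a => ⟨g a, hg₀ a⟩, by fun_prop⟩ a₀ (Complex.log (g a₀))
    (Subtype.ext (Complex.exp_log (hg₀ a₀)))
  exact ⟨l, l.continuous, fun a => congrArg Subtype.val (congrFun hl a)⟩

theorem not_exists_continuousOn_sphere_exp_eq_sub {w : ℂ} {R : ℝ} (hR : 0 ≤ R) :
    ¬∃ l : ℂ → ℂ, ContinuousOn l (sphere w R) ∧ ∀ z ∈ sphere w R, Complex.exp (l z) = z - w := by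
  rintro ⟨l, hl, hexp⟩
  have h_mem (θ : ℝ) : circleMap w R θ ∈ sphere w R := circleMap_mem_sphere w hR θ
  have h_cont : Continuous fun θ => l (circleMap w R θ) :=
    hl.comp_continuous (continuous_circleMap w R) h_mem
  have h_lift : (fun θ => l (circleMap w R θ)) =
      fun θ : ℝ => l (circleMap w R 0) + θ * Complex.I := by
    refine Complex.isCoveringMap_exp.eq_of_comp_eq h_cont (by fun_prop) ?_ 0 (by simp)
    ext θ
    simp [Complex.exp_add, hexp _ (h_mem _), circleMap_zero]
  have h_period := congrFun h_lift (2 * Real.pi)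
  simp [circleMap, Real.pi_ne_zero] at h_period

theorem not_exists_continuous_frontier_exp_eq_sub {W : Set ℂ} (hW : Bornology.IsBounded W)
    {w : ℂ} (hw : w ∈ W) :
    ¬∃ l : frontier W → ℂ, Continuous l ∧ ∀ z, Complex.exp (l z) = z - w := by
  classical
  rintro ⟨l, hl, hexp⟩
  obtain ⟨M, hM⟩ := ContinuousMap.exists_restrict_eq isClosed_frontier ⟨l, hl⟩
  have hM_exp (z : ℂ) (hz : z ∈ frontier W) : Complex.exp (M z) = z - w := by
    rw [← hexp ⟨z, hz⟩]
    exact congrArg Complex.exp (DFunLike.congr_fun hM ⟨z, hz⟩)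
  let g (z : ℂ) : ℂ := if z ∈ W then Complex.exp (M z) else z - w
  have hg : Continuous g := Continuous.if hM_exp (by fun_prop) (by fun_prop)
  have hg₀ (z : ℂ) : g z ≠ 0 := by
    by_cases hz : z ∈ W
    · simp [g, hz]
    · simpa [g, hz, sub_eq_zero] using (ne_of_mem_of_not_mem hw hz).symm
  obtain ⟨L, hL, hL_exp⟩ := exists_continuous_exp_eq hg hg₀
  obtain ⟨R, hR, hWR⟩ := hW.subset_ball_lt 0 w
  refine not_exists_continuousOn_sphere_exp_eq_sub (w := w) hR.le
    ⟨L, hL.continuousOn, fun z hz => ?_⟩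
  have hzW : z ∉ W := fun h => (mem_ball.1 (hWR h)).ne hz
  simp [hL_exp, g, hzW]

end Logarithm

section Arc

variable {A : Type*} [TopologicalSpace A] [SimplyConnectedSpace A] [LocallyPathConnectedSpace A]

theorem subset_range_of_frontier_subset_range_complex {f : A → ℂ} (hf : IsEmbedding f) {W : Set ℂ}
    (hW : Bornology.IsBounded W) (hfr : frontier W ⊆ range f) : W ⊆ range f := by
  intro w hw
  by_contra hwf
  obtain ⟨l, hl, hexp⟩ := exists_continuous_exp_eq (g := fun a => f a - w)
    (hf.continuous.sub continuous_const) fun a h => hwf ⟨a, sub_eq_zero.1 h⟩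
  let e : A ≃ₜ range f := hf.toHomeomorph
  refine not_exists_continuous_frontier_exp_eq_sub hW hw
    ⟨fun z => l (e.symm (inclusion hfr z)),
      hl.comp (e.symm.continuous.comp (continuous_inclusion hfr)), fun z => ?_⟩
  have he : f (e.symm (inclusion hfr z)) = z := congrArg Subtype.val (e.apply_symm_apply _)
  rw [hexp, he]

theorem subset_range_of_frontier_subset_range {E : Type*} [NormedAddCommGroup E] [NormedSpace ℝ E]
    (hE : Module.finrank ℝ E = 2) {f : A → E} (hf : IsEmbedding f) {W : Set E}
    (hW : Bornology.IsBounded W) (hfr : frontier W ⊆ range f) : W ⊆ range f := by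
  have : FiniteDimensional ℝ E := Module.finite_of_finrank_eq_succ hE
  let φ : E ≃L[ℝ] ℂ := .ofFinrankEq (hE.trans Complex.finrank_real_complex.symm)
  have hφfr : frontier (φ '' W) ⊆ range (φ ∘ f) := by
    rw [← φ.coe_toHomeomorph, ← φ.toHomeomorph.image_frontier, range_comp]
    exact image_mono hfr
  have hφW : φ '' W ⊆ range (φ ∘ f) := subset_range_of_frontier_subset_range_complex
    (φ.toHomeomorph.isEmbedding.comp hf) (φ.lipschitz.isBounded_image hW) hφfr
  rwa [range_comp, image_subset_image_iff φ.injective] at hφW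

end Arc

namespace IsJordanCurve

local notation "ℝ²" => EuclideanSpace ℝ (Fin 2)

variable {C U : Set ℝ²}

theorem isPathConnected (hC : IsJordanCurve C) : IsPathConnected C := by
  obtain ⟨f, hf, -, rfl⟩ := hC
  have : PathConnectedSpace (sphere (0 : ℝ²) 1) := isPathConnected_iff_pathConnectedSpace.1 <|
    isPathConnected_sphere (by simp [← Module.finrank_eq_rank]) 0 zero_le_one
  exact isPathConnected_range hf

theorem exists_isEmbedding_range_eq_sdiff_singleton (hC : IsJordanCurve C) {p : ℝ²} (hp : p ∈ C) :
    ∃ f : EuclideanSpace ℝ (Fin 1) → ℝ², IsEmbedding f ∧ range f = C \ {p} := by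
  obtain ⟨f, hf, hf_inj, rfl⟩ := hC
  obtain ⟨s, rfl⟩ := hp
  have : Fact (Module.finrank ℝ ℝ² = 1 + 1) := ⟨by simp⟩
  let e := stereographic' 1 s
  have he : IsOpenEmbedding e.symm := e.symm.isOpenEmbedding (stereographic'_target s)
  have he_range : range e.symm = {s}ᶜ := by
    rw [← image_univ, ← stereographic'_target s, e.symm_image_target_eq_source,
      stereographic'_source]
  refine ⟨f ∘ e.symm, (hf.isClosedEmbedding hf_inj).isEmbedding.comp he.isEmbedding, ?_⟩
  rw [range_comp, he_range, image_compl_eq_range_sdiff_image hf_inj, image_singleton]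

theorem interior_closure_eq (hC : IsJordanCurve (frontier U)) (hU : IsOpen U)
    (hb : Bornology.IsBounded U) : interior (closure U) = U := by
  refine subset_antisymm (fun p hp => ?_) (interior_maximal subset_closure hU)
  by_contra hpU
  have hp_fr : p ∈ frontier U := hU.frontier_eq ▸ ⟨interior_subset hp, hpU⟩
  obtain ⟨f, hf, hf_range⟩ := hC.exists_isEmbedding_range_eq_sdiff_singleton hp_fr
  have h_frontier : frontier (interior (closure U)) ⊆ range f := by
    rw [hf_range]
    exact subset_sdiff_singleton (frontier_interior_subset.trans frontier_closure_subset)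
      fun h => (isOpen_interior.frontier_eq.subset h).2 hp
  have h_arc : interior (closure U) ⊆ range f := subset_range_of_frontier_subset_range (by simp) hf
    (hb.closure.subset interior_subset) h_frontier
  exact (hf_range ▸ h_arc hp).2 rfl

theorem frontier_closure_eq (hC : IsJordanCurve (frontier U)) (hU : IsOpen U)
    (hb : Bornology.IsBounded U) : frontier (closure U) = frontier U := by
  rw [isClosed_closure.frontier_eq, hC.interior_closure_eq hU hb, hU.frontier_eq]

end IsJordanCurve

theorem stmt9_general {ι : Type*} [Finite ι] {Ω : Set (EuclideanSpace ℝ (Fin 2))}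
    {ω : ι → Set (EuclideanSpace ℝ (Fin 2))} (hΩ : IsOpen Ω) (hΩfr : IsPathConnected (frontier Ω))
    (hω : ∀ i, IsOpen (ω i)) (hωbdd : ∀ i, Bornology.IsBounded (ω i))
    (hωJordan : ∀ i, IsJordanCurve (frontier (ω i))) (hsub : ∀ i, closure (ω i) ⊆ Ω)
    (hdisj : Pairwise (Disjoint on fun i => closure (ω i))) :
    IsPathConnected (closure (Ω \ ⋃ i, closure (ω i))) := by
  have hfr (i : ι) : IsPathConnected (frontier (closure (ω i))) := by
    rw [(hωJordan i).frontier_closure_eq (hω i) (hωbdd i)]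
    exact (hωJordan i).isPathConnected
  simpa using isPathConnected_closure_sdiff_biUnion finite_univ hΩ
    (isPathConnected_closure_of_frontier hΩ hΩfr) (fun i _ => isClosed_closure) (fun i _ => hfr i)
    (fun i _ => hsub i) (hdisj.set_pairwise univ)

/-- the closure of a planar domain with holes `G = Ω \ ⋃ᵢ cl(ωᵢ)` is
path-connected. -/
theorem stmt9 (Ω : Set (EuclideanSpace ℝ (Fin 2)))
    (hopen : IsOpen Ω) (hconn : IsConnected Ω) (hbdd : Bornology.IsBounded Ω)
    (hJordan : IsJordanCurve (frontier Ω))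
    (N : ℕ) (ω : Fin N → Set (EuclideanSpace ℝ (Fin 2)))
    (hωopen : ∀ i, IsOpen (ω i)) (hωconn : ∀ i, IsConnected (ω i))
    (hωbdd : ∀ i, Bornology.IsBounded (ω i))
    (hωJordan : ∀ i, IsJordanCurve (frontier (ω i)))
    (hsub : ∀ i, closure (ω i) ⊆ Ω)
    (hdisj : ∀ i j, i ≠ j → closure (ω i) ∩ closure (ω j) = ∅)
    (G : Set (EuclideanSpace ℝ (Fin 2))) (hG : G = Ω \ ⋃ i, closure (ω i)) :
    IsPathConnected (closure G) := by
  subst hG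
  exact stmt9_general hopen hJordan.isPathConnected hωopen hωbdd hωJordan hsub
    fun i j hij => disjoint_iff_inter_eq_empty.2 (hdisj i j hij)
end

section
/- Let G = Ω \ ⋃_{i=1}^N cl(ω_i) be a planar domain with holes. Then cl(G) is locally path-connected in the following quantitative sense: for every x ∈ cl(G) and every ε̄ > 0 there exists δ > 0 such that for every z ∈ cl(G) with |x − z| < δ there is a continuous path γ : [0,1] → cl(G) with γ(0) = x, γ(1) = z and |γ(t) − x| < ε̄ for all t ∈ [0,1]. -/
/-!
Local path-connectedness of `cl(S)` reduces to that of `∂S`: a segment from a point of `cl(S)`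
towards `x` runs inside `S` until it first hits `∂S`, and one continues within `∂S`. Near each point
of `cl(G)`, the set `G` coincides with `Ω` or with the complement of one `cl(ωᵢ)`, so only the sets
`∂Ω` and `∂(cl(ωᵢ))` matter, and a Jordan curve is locally path-connected.

The delicate point is that `∂(cl(ωᵢ))` might a priori be smaller than the Jordan curve `∂ωᵢ`. If it
missed a point `x` of the curve, then by Tietze's theorem the identity of `∂(cl(ωᵢ))` would extend
to a map from the plane to the curve without `x`, which is homeomorphic to a line. But every
continuous map of the plane that is the identity on the frontier of a bounded set takes all values
in that set, by a winding number argument.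
-/

open Set Filter Topology Metric Function

section LocallyPathConnectedAt

/-- Local path-connectedness of a subset `S` of a topological space at a point `x`. Only
neighbourhoods of `x` itself are considered, and they need not be open (`S` is path-connected
*im kleinen* at `x`); the condition is vacuous when `x` is not in the closure of `S`. -/
def IsLocallyPathConnectedAt {X : Type*} [TopologicalSpace X] (S : Set X) (x : X) : Prop :=
  ∀ U ∈ 𝓝 x, pathComponentIn (S ∩ U) x ∈ 𝓝[S] x

namespace IsLocallyPathConnectedAt

variable {X : Type*} [TopologicalSpace X] {S T : Set X} {x : X}

theorem congr (hS : IsLocallyPathConnectedAt S x) (hST : S =ᶠ[𝓝 x] T) :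
    IsLocallyPathConnectedAt T x := by
  intro U hU
  have hW : {y | y ∈ S ↔ y ∈ T} ∈ 𝓝 x := hST.mem_iff
  rw [← nhdsWithin_eq_iff_eventuallyEq.2 hST]
  refine mem_of_superset (hS _ (inter_mem hU hW)) (pathComponentIn_mono ?_)
  rintro y ⟨hyS, hyU, hyST⟩
  exact ⟨hyST.1 hyS, hyU⟩

theorem of_locallyPathConnectedSpace [LocallyPathConnectedSpace S] (hS : IsClosed S) (x : X) :
    IsLocallyPathConnectedAt S x := by
  intro U hU
  by_cases hx : x ∈ S
  · have hV : pathComponentIn ((↑) ⁻¹' U) (⟨x, hx⟩ : S) ∈ 𝓝 (⟨x, hx⟩ : S) :=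
      pathComponentIn_mem_nhds (continuous_subtype_val.continuousAt.preimage_mem_nhds hU)
    rw [← map_nhds_subtype_val ⟨x, hx⟩]
    refine mem_of_superset (image_mem_map hV) ?_
    rintro _ ⟨y, hy, rfl⟩
    refine (JoinedIn.map hy continuous_subtype_val).mono ?_
    rintro _ ⟨w, hw, rfl⟩
    exact ⟨w.2, hw⟩
  · have hbot : 𝓝[S] x = ⊥ := notMem_closure_iff_nhdsWithin_eq_bot.1 (hS.closure_eq.symm ▸ hx)
    simp only [hbot, mem_bot]

theorem exists_path {X : Type*} [PseudoMetricSpace X] {S : Set X} {x : X}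
    (hS : IsLocallyPathConnectedAt S x) {ε : ℝ} (hε : 0 < ε) :
    ∃ δ : ℝ, 0 < δ ∧ ∀ z ∈ S, dist z x < δ → ∃ γ : ℝ → X,
      ContinuousOn γ (Icc 0 1) ∧ γ 0 = x ∧ γ 1 = z ∧
      ∀ t ∈ Icc (0 : ℝ) 1, γ t ∈ S ∧ dist (γ t) x < ε := by
  obtain ⟨δ, hδ, hball⟩ := mem_nhdsWithin_iff.1 (hS _ (ball_mem_nhds x hε))
  refine ⟨δ, hδ, fun z hzS hzx => ?_⟩
  obtain ⟨γ, hγ⟩ : JoinedIn (S ∩ ball x ε) x z := hball ⟨hzx, hzS⟩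
  refine ⟨γ.extend, γ.continuous_extend.continuousOn, γ.extend_zero, γ.extend_one, fun t ht => ?_⟩
  rw [γ.extend_apply ht]
  exact hγ ⟨t, ht⟩

end IsLocallyPathConnectedAt

theorem closure_eventuallyEq {X : Type*} [TopologicalSpace X] {S T : Set X} {x : X}
    (hST : S =ᶠ[𝓝 x] T) : closure S =ᶠ[𝓝 x] closure T := by
  filter_upwards [eventually_eventually_nhds.2 hST.mem_iff] with y hy
  exact propext (mem_closure_iff_frequently.trans
    ((frequently_congr hy).trans mem_closure_iff_frequently.symm))

theorem compl_eventuallyEq_sdiff_iUnion {X ι : Type*} [TopologicalSpace X] {S : Set X} {x : X}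
    {A : ι → Set X} (hfin : LocallyFinite A) (hclosed : ∀ i, IsClosed (A i))
    (hdisj : Pairwise (Disjoint on A)) {i : ι} (hi : x ∈ A i) (hS : S ∈ 𝓝 x) :
    (A i)ᶜ =ᶠ[𝓝 x] (S \ ⋃ j, A j : Set X) := by
  filter_upwards [hS, hfin.iInter_compl_mem_nhds hclosed x] with y hyS hy
  have hother : ∀ j, y ∈ A j → j = i := fun j hj => by_contra fun hji =>
    mem_iInter₂.1 hy j ((hdisj hji).notMem_of_mem_right hi) hj
  have hyi : (y ∈ ⋃ j, A j) ↔ y ∈ A i :=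
    mem_iUnion.trans ⟨fun ⟨j, hj⟩ => hother j hj ▸ hj, fun h => ⟨i, h⟩⟩
  exact propext ⟨fun h => ⟨hyS, mt hyi.1 h⟩, fun h => mt hyi.2 h.2⟩

end LocallyPathConnectedAt

section FrontierToClosure

theorem subset_interior_of_isPreconnected {X : Type*} [TopologicalSpace X] {C S : Set X}
    (hC : IsPreconnected C) (hCS : (C ∩ closure S).Nonempty) (hfr : Disjoint C (frontier S)) :
    C ⊆ interior S := by
  have hint : ∀ y ∈ C, y ∈ closure S → y ∈ interior S := fun y hyC hyS =>
    by_contra fun hy => hfr.notMem_of_mem_left hyC ⟨hyS, hy⟩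
  obtain ⟨y, hyC, hyS⟩ := hCS
  exact hC.subset_of_closure_inter_subset isOpen_interior ⟨y, hyC, hint y hyC hyS⟩
    fun w hw => hint w hw.2 (closure_mono interior_subset hw.1)

variable {E : Type*} [AddCommGroup E] [Module ℝ E] [TopologicalSpace E] [IsTopologicalAddGroup E]
  [ContinuousSMul ℝ E] {S : Set E} {x : E}

theorem exists_segment_subset_closure {z : E} (hz : z ∈ closure S) (x : E) :
    ∃ p ∈ segment ℝ z x, p ∈ insert x (frontier S) ∧ segment ℝ z p ⊆ closure S := by
  let c : ℝ → E := AffineMap.lineMap z x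
  have hc : Continuous c := AffineMap.lineMap_continuous
  have hc0 : c 0 = z := AffineMap.lineMap_apply_zero z x
  have hclosed : IsClosed (insert 1 (c ⁻¹' frontier S)) :=
    isClosed_singleton.union (isClosed_frontier.preimage hc)
  obtain ⟨τ, ⟨hτ, hτfr⟩, hτmin⟩ := (isCompact_Icc.inter_right hclosed).exists_isLeast
    ⟨1, right_mem_Icc.2 zero_le_one, mem_insert _ _⟩
  have hIco : Disjoint (c '' Ico 0 τ) (frontier S) := by
    rw [disjoint_left]
    rintro _ ⟨t, ht, rfl⟩ hfr
    exact ht.2.not_ge (hτmin ⟨⟨ht.1, ht.2.le.trans hτ.2⟩, mem_insert_of_mem _ hfr⟩)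
  have hIcc : c '' Icc 0 τ ⊆ closure S := by
    rcases hτ.1.eq_or_lt with rfl | hτpos
    · simpa only [Icc_self, image_singleton, hc0, singleton_subset_iff] using hz
    · have hint : c '' Ico 0 τ ⊆ interior S :=
        subset_interior_of_isPreconnected (isPreconnected_Ico.image c hc.continuousOn)
          ⟨z, ⟨0, left_mem_Ico.2 hτpos, hc0⟩, hz⟩ hIco
      rw [← closure_Ico hτpos.ne]
      exact (image_closure_subset_closure_image hc).trans
        (closure_mono (hint.trans interior_subset))
  refine ⟨c τ, segment_eq_image_lineMap ℝ z x ▸ mem_image_of_mem c hτ, ?_, ?_⟩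
  · exact hτfr.imp_left fun h => (congrArg c h).trans (AffineMap.lineMap_apply_one z x)
  · rw [segment_eq_image_lineMap]
    rintro _ ⟨t, ht, rfl⟩
    refine hIcc ⟨t * τ, ⟨mul_nonneg ht.1 hτ.1, mul_le_of_le_one_left hτ.1 ht.2⟩, ?_⟩
    exact (AffineMap.lineMap_lineMap_right z x τ t).symm

theorem IsLocallyPathConnectedAt.closure_of_frontier [LocallyConvexSpace ℝ E]
    (hS : IsLocallyPathConnectedAt (frontier S) x) : IsLocallyPathConnectedAt (closure S) x := by
  intro U hU
  obtain ⟨W, hW, hWU⟩ := mem_nhdsWithin_iff_exists_mem_nhds_inter.1 (hS U hU)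
  obtain ⟨V, ⟨hV, hVconv⟩, hVWU⟩ :=
    (LocallyConvexSpace.convex_basis (𝕜 := ℝ) x).mem_iff.1 (inter_mem hW hU)
  refine mem_nhdsWithin_iff_exists_mem_nhds_inter.2 ⟨V, hV, ?_⟩
  rintro z ⟨hzV, hz⟩
  obtain ⟨p, hpzx, hp, hzp⟩ := exists_segment_subset_closure hz x
  have hpV : p ∈ V := hVconv.segment_subset hzV (mem_of_mem_nhds hV) hpzx
  have hsegment : segment ℝ z p ⊆ closure S ∩ U := subset_inter hzp
    ((hVconv.segment_subset hzV hpV).trans (hVWU.trans inter_subset_right))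
  have hxp : JoinedIn (closure S ∩ U) x p := by
    rcases hp with rfl | hp
    · exact .refl (hsegment (right_mem_segment ℝ z p))
    · exact (hWU ⟨(hVWU hpV).1, hp⟩ : JoinedIn (frontier S ∩ U) x p).mono
        (inter_subset_inter_left U frontier_subset_closure)
  exact hxp.trans (JoinedIn.of_segment_subset hsegment).symm

theorem isLocallyPathConnectedAt_closure_sdiff_iUnion [LocallyConvexSpace ℝ E] {ι : Type*}
    {A : ι → Set E} (hS : IsLocallyPathConnectedAt (frontier S) x)
    (hA : ∀ i, IsLocallyPathConnectedAt (frontier (A i)) x) (hfin : LocallyFinite A)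
    (hclosed : ∀ i, IsClosed (A i)) (hAS : ∀ i, A i ⊆ interior S)
    (hdisj : Pairwise (Disjoint on A)) : IsLocallyPathConnectedAt (closure (S \ ⋃ i, A i)) x := by
  by_cases hx : x ∈ ⋃ i, A i
  · obtain ⟨i, hi⟩ := mem_iUnion.1 hx
    have hgerm : (A i)ᶜ =ᶠ[𝓝 x] S \ ⋃ j, A j :=
      compl_eventuallyEq_sdiff_iUnion hfin hclosed hdisj hi (mem_interior_iff_mem_nhds.1 (hAS i hi))
    exact ((frontier_compl (A i)).symm ▸ hA i).closure_of_frontier.congr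
      (closure_eventuallyEq hgerm)
  · have hgerm : S =ᶠ[𝓝 x] (S \ ⋃ i, A i : Set E) := by
      filter_upwards [(hfin.isClosed_iUnion hclosed).isOpen_compl.mem_nhds hx] with y hy
      exact propext (and_iff_left hy).symm
    exact hS.closure_of_frontier.congr (closure_eventuallyEq hgerm)

end FrontierToClosure

section Plane

theorem exists_eq_of_eqOn_id_sphere {g : ℂ → ℂ} (hg : Continuous g) {p : ℂ} {R : ℝ} (hR : 0 < R)
    (hgR : EqOn g id (sphere p R)) : ∃ z, g z = p := by
  by_contra! hgp
  have hne : ∀ z, g z - p ≠ 0 := fun z => sub_ne_zero.2 (hgp z)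
  obtain ⟨L, ⟨-, hL⟩, -⟩ := Complex.isCoveringMapOn_exp.existsUnique_continuousMap_lifts
    (A := ℂ) ⟨fun z => g z - p, by fun_prop⟩ (a₀ := 0) (Complex.exp_log (hne 0)) hne
  have hexpL : ∀ z, Complex.exp (L z) = g z - p := congrFun hL
  -- `exp ∘ φ` is constant, yet `φ` drops by `2πi` over one turn because `circleMap` is periodic.
  let φ : ℝ → ℂ := fun t => L (circleMap p R t) - t * Complex.I
  have hφ : Continuous φ := by fun_prop
  have hexpφ : ∀ t, Complex.exp (φ t) = R := by
    intro t
    rw [Complex.exp_sub, hexpL, hgR (circleMap_mem_sphere p hR.le t), id, circleMap,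
      add_sub_cancel_left, mul_div_cancel_right₀ _ (Complex.exp_ne_zero _)]
  have hconst : φ (2 * Real.pi) = φ 0 := Complex.isCoveringMap_exp.const_of_comp hφ
    (fun s t => Subtype.ext ((hexpφ s).trans (hexpφ t).symm)) _ _
  simp [φ, circleMap] at hconst

theorem subset_range_of_eqOn_id_frontier_complex {S : Set ℂ} (hS : Bornology.IsBounded S)
    {g : ℂ → ℂ} (hg : Continuous g) (hgS : EqOn g id (frontier S)) : S ⊆ range g := by
  classical
  intro p hp
  have hF : Continuous (S.piecewise g id) := hg.piecewise hgS continuous_id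
  obtain ⟨R, hR, hSR⟩ := hS.subset_ball_lt 0 p
  obtain ⟨z, hz⟩ := exists_eq_of_eqOn_id_sphere hF hR fun w hw =>
    piecewise_eq_of_notMem _ _ _ fun hwS => (mem_sphere.1 hw).not_lt (hSR hwS)
  by_cases hzS : z ∈ S
  · exact ⟨z, by rwa [piecewise_eq_of_mem _ _ _ hzS] at hz⟩
  · rw [piecewise_eq_of_notMem _ _ _ hzS, id] at hz
    exact absurd (hz ▸ hp) hzS

theorem subset_range_of_eqOn_id_frontier {E : Type*} [NormedAddCommGroup E] [NormedSpace ℝ E]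
    (hE : Module.finrank ℝ E = 2) {S : Set E} (hS : Bornology.IsBounded S)
    {g : E → E} (hg : Continuous g) (hgS : EqOn g id (frontier S)) : S ⊆ range g := by
  have : FiniteDimensional ℝ E := .of_finrank_eq_succ hE
  let e : ℂ ≃L[ℝ] E := .ofFinrankEq (Complex.finrank_real_complex.trans hE.symm)
  have hbdd : Bornology.IsBounded (e ⁻¹' S) := e.antilipschitz.isBounded_preimage hS
  have hfr : EqOn (e.symm ∘ g ∘ e) id (frontier (e ⁻¹' S)) := by
    intro w hw
    have hew : e w ∈ frontier S := (e.toHomeomorph.preimage_frontier S).symm.subset hw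
    exact (e.symm_apply_eq).2 (hgS hew)
  intro p hp
  obtain ⟨z, hz⟩ := subset_range_of_eqOn_id_frontier_complex hbdd (by fun_prop) hfr
    (show e.symm p ∈ e ⁻¹' S by simpa using hp)
  exact ⟨e z, e.symm.injective hz⟩

end Plane

section Jordan

universe u v

theorem exists_continuousMap_eqOn_id {X : Type u} {Y : Type v} [TopologicalSpace X] [NormalSpace X]
    [TopologicalSpace Y] [TietzeExtension.{u} Y] {f : Y → X} (hf : IsEmbedding f) {K : Set X}
    (hK : IsClosed K) (hKf : K ⊆ range f) : ∃ g : C(X, Y), EqOn (f ∘ g) id K := by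
  obtain ⟨g, hg⟩ := ContinuousMap.exists_restrict_eq hK
    ⟨hf.toHomeomorph.symm ∘ inclusion hKf, by fun_prop⟩
  refine ⟨g, fun x hx => ?_⟩
  have hgx : g x = hf.toHomeomorph.symm ⟨x, hKf hx⟩ := DFunLike.congr_fun hg ⟨x, hx⟩
  rw [comp_apply, hgx]
  exact congrArg Subtype.val (hf.toHomeomorph.apply_symm_apply _)

theorem tietzeExtension_compl_singleton_sphere {E : Type*} [NormedAddCommGroup E]
    [InnerProductSpace ℝ E] {n : ℕ} (hE : Module.finrank ℝ E = n + 1) (v : sphere (0 : E) 1) :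
    TietzeExtension.{u} ({v}ᶜ : Set (sphere (0 : E) 1)) := by
  have : Fact (Module.finrank ℝ E = n + 1) := ⟨hE⟩
  let σ := stereographic' n v
  exact .of_homeo (((Homeomorph.setCongr (stereographic'_source v).symm).trans
    σ.toHomeomorphSourceTarget).trans
    ((Homeomorph.setCongr (stereographic'_target v)).trans (Homeomorph.Set.univ _)))

namespace IsJordanCurve

variable {J : Set (EuclideanSpace ℝ (Fin 2))}

theorem locallyPathConnectedSpace (hJ : IsJordanCurve J) : LocallyPathConnectedSpace J := by
  obtain ⟨f, hf, hinj, rfl⟩ := hJ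
  have : Fact (Module.finrank ℝ (EuclideanSpace ℝ (Fin 2)) = 1 + 1) := ⟨finrank_euclideanSpace_fin⟩
  have : LocallyPathConnectedSpace (sphere (0 : EuclideanSpace ℝ (Fin 2)) 1) :=
    ChartedSpace.locallyPathConnectedSpace (EuclideanSpace ℝ (Fin 1)) _
  exact (hf.isClosedEmbedding hinj).isEmbedding.toHomeomorph.isQuotientMap.locallyPathConnectedSpace

theorem exists_continuous_eqOn_id_range_subset (hJ : IsJordanCurve J)
    {x : EuclideanSpace ℝ (Fin 2)} (hx : x ∈ J) {K : Set (EuclideanSpace ℝ (Fin 2))}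
    (hK : IsClosed K) (hKJ : K ⊆ J \ {x}) :
    ∃ g : EuclideanSpace ℝ (Fin 2) → EuclideanSpace ℝ (Fin 2),
      Continuous g ∧ EqOn g id K ∧ range g ⊆ J \ {x} := by
  obtain ⟨f, hf, hinj, rfl⟩ := hJ
  obtain ⟨s, rfl⟩ := hx
  let f' : ({s}ᶜ : Set (sphere (0 : EuclideanSpace ℝ (Fin 2)) 1)) → EuclideanSpace ℝ (Fin 2) :=
    f ∘ (↑)
  have hf' : IsEmbedding f' := (hf.isClosedEmbedding hinj).isEmbedding.comp .subtypeVal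
  have hrange : range f' = range f \ {f s} := by
    rw [range_comp, Subtype.range_coe, image_compl_eq_range_sdiff_image hinj, image_singleton]
  have : TietzeExtension.{0} ({s}ᶜ : Set (sphere (0 : EuclideanSpace ℝ (Fin 2)) 1)) :=
    tietzeExtension_compl_singleton_sphere (n := 1) finrank_euclideanSpace_fin s
  obtain ⟨g, hg⟩ := exists_continuousMap_eqOn_id hf' hK (hrange ▸ hKJ)
  exact ⟨f' ∘ g, hf'.continuous.comp g.continuous, hg, hrange ▸ range_comp_subset_range g f'⟩

theorem frontier_eq_of_isBounded (hJ : IsJordanCurve J) {T : Set (EuclideanSpace ℝ (Fin 2))}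
    (hT : Bornology.IsBounded T) (hJT : J ⊆ T) (hfr : frontier T ⊆ J) : frontier T = J := by
  refine hfr.antisymm fun x hx => by_contra fun hxT => ?_
  obtain ⟨g, hg, hgT, hgJ⟩ := hJ.exists_continuous_eqOn_id_range_subset hx isClosed_frontier
    (subset_sdiff_singleton hfr hxT)
  exact (hgJ (subset_range_of_eqOn_id_frontier finrank_euclideanSpace_fin hT hg hgT (hJT hx))).2 rfl

theorem frontier_closure_eq_s10 {S : Set (EuclideanSpace ℝ (Fin 2))}
    (hS : IsJordanCurve (frontier S)) (hbdd : Bornology.IsBounded S) :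
    frontier (closure S) = frontier S :=
  hS.frontier_eq_of_isBounded hbdd.closure frontier_subset_closure frontier_closure_subset

end IsJordanCurve

end Jordan

theorem stmt10_general {ι : Type*} {Ω : Set (EuclideanSpace ℝ (Fin 2))}
    {ω : ι → Set (EuclideanSpace ℝ (Fin 2))} (hΩ : LocallyPathConnectedSpace (frontier Ω))
    (hfin : LocallyFinite ω) (hbdd : ∀ i, Bornology.IsBounded (ω i))
    (hJordan : ∀ i, IsJordanCurve (frontier (ω i))) (hsub : ∀ i, closure (ω i) ⊆ interior Ω)
    (hdisj : Pairwise (Disjoint on fun i => closure (ω i)))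
    (x : EuclideanSpace ℝ (Fin 2)) (ε : ℝ) (hε : 0 < ε) :
    ∃ δ : ℝ, 0 < δ ∧ ∀ z ∈ closure (Ω \ ⋃ i, closure (ω i)), ‖x - z‖ < δ →
      ∃ γ : ℝ → EuclideanSpace ℝ (Fin 2),
        ContinuousOn γ (Icc 0 1) ∧ γ 0 = x ∧ γ 1 = z ∧
        ∀ t ∈ Icc (0 : ℝ) 1, γ t ∈ closure (Ω \ ⋃ i, closure (ω i)) ∧ ‖γ t - x‖ < ε := by
  have hω (i : ι) : IsLocallyPathConnectedAt (frontier (closure (ω i))) x := by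
    rw [(hJordan i).frontier_closure_eq_s10 (hbdd i)]
    have := (hJordan i).locallyPathConnectedSpace
    exact .of_locallyPathConnectedSpace isClosed_frontier x
  have hG : IsLocallyPathConnectedAt (closure (Ω \ ⋃ i, closure (ω i))) x :=
    isLocallyPathConnectedAt_closure_sdiff_iUnion
      (.of_locallyPathConnectedSpace isClosed_frontier x) hω hfin.closure
      (fun _ => isClosed_closure) hsub hdisj
  simpa only [dist_eq_norm, norm_sub_rev x] using hG.exists_path hε

/-- the closure of a planar domain with holes `G = Ω \ ⋃ᵢ cl(ωᵢ)` is
locally path-connected, quantitatively: for every `x ∈ cl(G)` and `ε̄ > 0` there is a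
`δ > 0` such that every `z ∈ cl(G)` with `|x − z| < δ` is joined to `x` by a continuous
path in `cl(G)` staying within distance `ε̄` of `x`. -/
theorem stmt10 (Ω : Set (EuclideanSpace ℝ (Fin 2)))
    (hopen : IsOpen Ω) (hconn : IsConnected Ω) (hbdd : Bornology.IsBounded Ω)
    (hJordan : IsJordanCurve (frontier Ω))
    (N : ℕ) (ω : Fin N → Set (EuclideanSpace ℝ (Fin 2)))
    (hωopen : ∀ i, IsOpen (ω i)) (hωconn : ∀ i, IsConnected (ω i))
    (hωbdd : ∀ i, Bornology.IsBounded (ω i))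
    (hωJordan : ∀ i, IsJordanCurve (frontier (ω i)))
    (hsub : ∀ i, closure (ω i) ⊆ Ω)
    (hdisj : ∀ i j, i ≠ j → closure (ω i) ∩ closure (ω j) = ∅)
    (G : Set (EuclideanSpace ℝ (Fin 2))) (hG : G = Ω \ ⋃ i, closure (ω i)) :
    ∀ x ∈ closure G, ∀ ε : ℝ, 0 < ε → ∃ δ : ℝ, 0 < δ ∧
      ∀ z ∈ closure G, ‖x - z‖ < δ →
        ∃ γ : ℝ → EuclideanSpace ℝ (Fin 2),
          ContinuousOn γ (Set.Icc 0 1) ∧ γ 0 = x ∧ γ 1 = z ∧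
          ∀ t ∈ Set.Icc (0 : ℝ) 1, γ t ∈ closure G ∧ ‖γ t - x‖ < ε := by
  subst hG
  exact fun x _ => stmt10_general hJordan.locallyPathConnectedSpace (locallyFinite_of_finite ω)
    hωbdd hωJordan (fun i => (hsub i).trans_eq hopen.interior_eq.symm)
    (fun i j hij => Set.disjoint_iff_inter_eq_empty.2 (hdisj i j hij)) x
end
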